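/- For every integer i ≥ 0 there exists N such that for all m, n ≥ N the homotopy groups π_i(O(m), I) and π_i(O(n), I) are isomorphic; that is, the homotopy groups π_i O(n) are independent of n for n sufficiently large. -/

import Mathlib

/-!
The block inclusion `O(n) → O(n+1)` identifies `O(n)` with the stabilizer of the last basis vector
`e`, and it induces a bijection on `π_i` as soon as `i + 1 < n`; so `N = i + 2` works, by
composing these bijections.  When `i ≥ 1` they are multiplicative, being induced by a continuous
map (`mapPi_mul`).

Both injectivity and surjectivity (`bijective_incl`) come from a compression statement
(`compress`): if `X` is a retract of a real vector space of dimension `< n` and `f : X → O(n+1)`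
lands in the stabilizer of `e` on a subset `A`, then `f` is homotopic, relative to `A`, to a map
into the stabilizer of `e`.  It is applied to the cube `I^i` relative to its boundary
(surjectivity) and to `I × I^i` relative to its boundary (injectivity).

The compression has two ingredients, which replace the long exact sequence of the fibration
`O(n) → O(n+1) → S^n` and the vanishing of `π_i(S^n)` for `i < n`.

* Homotopy lifting by explicit rotations (`rotate`): for unit vectors `u ≠ -y`, the product of
  reflections in `u` and `u + y` is a rotation taking `u` to `y` which depends continuously on
  `(u, y)`.  Hence, if `w : X → ℝ^m` is never a nonpositive multiple of `f e`, then `f` is homotopic,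
  relative to the set where `w = f e`, to a map `g` with `g e` a positive multiple of `w`.
* General position (`exists_nonvanishing`): a map `X → ℝ^n` can be perturbed to a nowhere
  vanishing one, because the range of a `C¹` map from a space of dimension `< n` to `ℝ^n` has dense
  complement.

Write `f e = (a, b)` with `a : X → ℝ^n` and `b : X → ℝ`.  Perturbing `a` where `b < 1` yields
`w` which avoids the ray through `-e`; then `rotate` applies twice, first moving `f e` to the direction
of `w`, then the direction of `w` to `e`.
-/

open scoped Topology
open scoped Matrix unitInterval

namespace StableOrthogonal

/-- The orthogonal group `O(n)`, with the subspace topology. -/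
abbrev O (n : ℕ) := Matrix.unitaryGroup (Fin n) ℝ

/-! ### Reflections and lifting of homotopies -/

section Householder
variable {n : ℕ}

/-- The matrix of the reflection in the hyperplane orthogonal to `a`; for `a = 0` the convention
`2 / 0 = 0` makes it the identity, so it is orthogonal for every `a`. -/
noncomputable def householder (a : Fin n → ℝ) : Matrix (Fin n) (Fin n) ℝ :=
  1 - (2 / (a ⬝ᵥ a)) • Matrix.vecMulVec a a

lemma householder_mul_self (a : Fin n → ℝ) : householder a * householder a = 1 := by
  rw [householder]
  by_cases h : a ⬝ᵥ a = 0
  · simp [h]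
  · simp only [mul_sub, sub_mul, mul_one, one_mul, Matrix.smul_mul, Matrix.mul_smul,
      Matrix.vecMulVec_mul_vecMulVec, smul_smul]
    ext i j
    simp only [Matrix.sub_apply, Matrix.smul_apply, Matrix.vecMulVec_apply, smul_eq_mul,
      Pi.smul_apply]
    field_simp
    ring

lemma householder_mem (a : Fin n → ℝ) : householder a ∈ Matrix.unitaryGroup (Fin n) ℝ := by
  have hT : star (householder a) = householder a := by
    rw [Matrix.star_eq_conjTranspose, Matrix.conjTranspose_eq_transpose_of_trivial]
    simp [householder, Matrix.transpose_sub, Matrix.transpose_smul, Matrix.transpose_vecMulVec]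
  rw [Matrix.mem_unitaryGroup_iff, hT, householder_mul_self]

lemma householder_mulVec (a u : Fin n → ℝ) :
    householder a *ᵥ u = u - (2 * (a ⬝ᵥ u) / (a ⬝ᵥ a)) • a := by
  ext i
  simp [householder, Matrix.sub_mulVec, Matrix.smul_mulVec, Matrix.vecMulVec_mulVec]
  ring

lemma householder_smul (c : ℝ) (hc : c ≠ 0) (a : Fin n → ℝ) :
    householder (c • a) = householder a := by
  by_cases h : a ⬝ᵥ a = 0
  · simp [householder, h]
  · ext i j
    simp [householder, Matrix.vecMulVec_apply]
    field_simp

/-- The reflection `householder a` as an element of `O(n)`. -/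
noncomputable def reflO (a : Fin n → ℝ) : O n := ⟨householder a, householder_mem a⟩

lemma reflO_mul_self (a : Fin n → ℝ) : reflO a * reflO a = 1 :=
  Subtype.ext (householder_mul_self a)

lemma continuous_reflO {X : Type*} [TopologicalSpace X] {a : X → Fin n → ℝ} (ha : Continuous a)
    (h0 : ∀ x, a x ≠ 0) : Continuous fun x => reflO (a x) := by
  refine Continuous.subtype_mk ?_ _
  have : ∀ x, a x ⬝ᵥ a x ≠ 0 := fun x => by simpa using h0 x
  have hd : Continuous fun x => a x ⬝ᵥ a x := ha.dotProduct ha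
  unfold householder
  refine continuous_const.sub (((continuous_const.div hd this)).smul (ha.matrix_vecMulVec ha))

end Householder

lemma dot_mulVec {n : ℕ} (A : O n) (u v : Fin n → ℝ) :
    (A.1 *ᵥ u) ⬝ᵥ (A.1 *ᵥ v) = u ⬝ᵥ v := by
  rw [Matrix.dotProduct_mulVec, Matrix.vecMul_mulVec, ← Matrix.dotProduct_mulVec]
  have := Matrix.UnitaryGroup.star_mul_self A
  rw [Matrix.star_eq_conjTranspose, Matrix.conjTranspose_eq_transpose_of_trivial] at this
  have h2 := congrArg (fun M => M.mulVec v) this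
  simpa using congrArg (fun w => u ⬝ᵥ w) h2

/-- Lifting to `O(n)` of the straight-line homotopy from `f e` to `w`, after radial projection to the
sphere.  The hypothesis `hw` says that the segment from `f x e` to `w x` misses the origin. -/
lemma rotate {n : ℕ} {X : Type*} [TopologicalSpace X] (f : C(X, O n)) (e : Fin n → ℝ)
    (he : e ⬝ᵥ e = 1) (w : C(X, Fin n → ℝ))
    (hw : ∀ x (c : ℝ), 0 ≤ c → w x ≠ -c • ((f x).1 *ᵥ e)) :
    ∃ g : C(X, O n), f.HomotopicRel g {x | w x = (f x).1 *ᵥ e} ∧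
      ∀ x, ∃ r : ℝ, 0 < r ∧ (g x).1 *ᵥ e = r • w x := by
  let u : X → Fin n → ℝ := fun x => (f x).1 *ᵥ e
  have hu : Continuous u := (continuous_subtype_val.comp f.continuous).matrix_mulVec continuous_const
  have huu : ∀ x, u x ⬝ᵥ u x = 1 := fun x => by rw [dot_mulVec, he]
  have hu0 : ∀ x, u x ≠ 0 := fun x h => by simpa [h] using huu x
  let z : I × X → Fin n → ℝ := fun p => (1 - (p.1 : ℝ)) • u p.2 + (p.1 : ℝ) • w p.2
  have hz : Continuous z := by fun_prop
  let ℓ : I × X → ℝ := fun p => √(z p ⬝ᵥ z p)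
  have hℓ : Continuous ℓ := (hz.dotProduct hz).sqrt
  -- The reflection in `u + z / |z|` is used in the rescaled form `a = z + |z| u`.
  let a : I × X → Fin n → ℝ := fun p => z p + ℓ p • u p.2
  have ha : Continuous a := by fun_prop
  have ha0 : ∀ p, a p ≠ 0 := by
    rintro ⟨t, x⟩ h
    have hl : 0 ≤ ℓ (t, x) := Real.sqrt_nonneg _
    have ht1 : (t : ℝ) ≤ 1 := t.2.2
    have h1 : (t : ℝ) • w x = -(ℓ (t, x) + (1 - t)) • u x := by
      have : (1 - (t : ℝ)) • u x + (t : ℝ) • w x + ℓ (t, x) • u x = 0 := h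
      rw [← sub_eq_zero, ← this]
      module
    rcases t.2.1.eq_or_lt with h0 | h0
    · rw [← h0] at h1
      have : ℓ (t, x) + (1 - 0) = 0 := by
        rw [zero_smul, eq_comm, smul_eq_zero, neg_eq_zero] at h1
        exact h1.resolve_right (hu0 x)
      linarith
    · refine hw x ((ℓ (t, x) + (1 - t)) / t) (div_nonneg (by linarith) h0.le) ?_
      have h2 := congrArg (fun y => (t : ℝ)⁻¹ • y) h1
      simp only [smul_smul, inv_mul_cancel₀ h0.ne', one_smul] at h2
      rw [h2]; congr 1; ring
  -- The factor in front of `f` is the rotation taking `u` to `z / |z|`.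
  let H : C(I × X, O n) := ⟨fun p => reflO (a p) * reflO (u p.2) * f p.2, by
    have h1 := continuous_reflO ha ha0
    have h2 := continuous_reflO (hu.comp continuous_snd (X := I × X)) (fun p => hu0 p.2)
    exact (h1.mul h2).mul (f.continuous.comp continuous_snd)⟩
  have hz1 : ∀ p, z p = u p.2 → H p = f p.2 := by
    intro p hp
    have hl : ℓ p = 1 := by simp [ℓ, hp, huu]
    have : reflO (a p) = reflO (u p.2) := by
      have : a p = (2 : ℝ) • u p.2 := by simp [a, hl, hp, two_smul]
      rw [this]; exact Subtype.ext (householder_smul 2 two_ne_zero _)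
    change reflO (a p) * reflO (u p.2) * f p.2 = _
    rw [this, reflO_mul_self, one_mul]
  refine ⟨H.comp ⟨fun x => (1, x), by fun_prop⟩, ⟨⟨⟨H, ?_, ?_⟩, ?_⟩⟩, ?_⟩
  · intro x; exact hz1 (0, x) (by simp [z])
  · intro x; rfl
  · intro t x hx
    refine hz1 (t, x) ?_
    have hx' : w x = u x := hx
    simp only [z, hx', ← add_smul]; simp
  · intro x
    set p : I × X := (1, x) with hp
    have hzw : z p = w x := by simp [z, hp]
    have haa : a p ⬝ᵥ a p ≠ 0 := by simpa using ha0 p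
    have hl2 : ℓ p * ℓ p = z p ⬝ᵥ z p :=
      Real.mul_self_sqrt (Finset.sum_nonneg fun i _ => mul_self_nonneg _)
    have hl0 : ℓ p ≠ 0 := by
      intro h0
      apply ha0 p
      rw [h0, mul_zero, eq_comm, dotProduct_self_eq_zero] at hl2
      simp [a, hl2, h0]
    refine ⟨(ℓ p)⁻¹, inv_pos.2 (lt_of_le_of_ne (Real.sqrt_nonneg _) hl0.symm), ?_⟩
    change ((householder (a p) * householder (u x)) * (f x).1) *ᵥ e = _
    rw [← Matrix.mulVec_mulVec, ← Matrix.mulVec_mulVec]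
    change householder (a p) *ᵥ (householder (u x) *ᵥ u x) = _
    have e1 : a p ⬝ᵥ a p = 2 * ℓ p * (ℓ p + z p ⬝ᵥ u x) := by
      simp only [a, dotProduct_add, add_dotProduct, dotProduct_smul, smul_dotProduct, hp, huu,
        smul_eq_mul]
      simp only [← hp, ← hl2, dotProduct_comm (u x) (z p)]; ring
    have e2 : a p ⬝ᵥ u x = ℓ p + z p ⬝ᵥ u x := by
      simp only [a, add_dotProduct, smul_dotProduct, hp, huu, smul_eq_mul]; ring
    have e3 : ℓ p + z p ⬝ᵥ u x ≠ 0 := fun h => haa (by rw [e1, h, mul_zero])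
    have e4 : householder (u x) *ᵥ u x = - u x := by
      rw [householder_mulVec, huu]; ext i; simp; ring
    rw [e4, Matrix.mulVec_neg, householder_mulVec, e1, e2, ← hzw]
    have e5 : 2 * (ℓ p + z p ⬝ᵥ u x) / (2 * ℓ p * (ℓ p + z p ⬝ᵥ u x)) = (ℓ p)⁻¹ := by
      field_simp
    rw [e5]
    have e6 : a p = z p + ℓ p • u x := rfl
    rw [e6, smul_add, smul_smul, inv_mul_cancel₀ hl0, one_smul]
    abel

/-! ### General position and compression into the stabilizer of the last basis vector -/

/-- Maps to `ℝ^n` from a retract of a vector space of dimension `< n` can be perturbed off the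
origin: approximate by a smooth map, then translate by a small vector outside its range. -/
lemma exists_nonvanishing {X E : Type*} [TopologicalSpace X] [NormedAddCommGroup E]
    [NormedSpace ℝ E] [FiniteDimensional ℝ E] (s : C(X, E)) (r : C(E, X)) (hrs : ∀ x, r (s x) = x)
    {n : ℕ} (hn : Module.finrank ℝ E < n) (a : C(X, Fin n → ℝ)) {ε : ℝ} (hε : 0 < ε) :
    ∃ q : C(X, Fin n → ℝ), (∀ x, dist (q x) (a x) < ε) ∧ ∀ x, q x ≠ 0 := by
  obtain ⟨g, hg, hga, -⟩ := (a.comp r).continuous.exists_contDiff_approx 1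
    (continuous_const (y := ε / 2)) (fun _ => half_pos hε)
  obtain ⟨c, hc, hcr⟩ := (ContDiff.dense_compl_range_of_finrank_lt_finrank hg
    (by simpa using hn)).exists_dist_lt 0 (half_pos hε)
  refine ⟨⟨fun x => g (s x) - c, by have := hg.continuous; fun_prop⟩, fun x => ?_, fun x h => ?_⟩
  · have h1 := hga (s x)
    simp only [ContinuousMap.comp_apply, hrs] at h1
    calc dist (g (s x) - c) (a x) ≤ dist (g (s x) - c) (g (s x)) + dist (g (s x)) (a x) :=
          dist_triangle _ _ _
      _ < ε / 2 + ε / 2 := by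
          refine add_lt_add ?_ h1
          simpa [dist_eq_norm] using hcr
      _ = ε := add_halves ε
  · exact hc ⟨s x, sub_eq_zero.1 h⟩

/-- The last vector of the standard basis of `ℝ^(n+1)`. -/
abbrev lastVec (n : ℕ) : Fin (n + 1) → ℝ := Pi.single (Fin.last n) 1

/-- Maps into `O(n+1)` from a retract of a vector space of dimension `< n` can be deformed into the
stabilizer of the last basis vector, relative to any set `A` on which they already lie in it. -/
lemma compress {X E : Type*} [TopologicalSpace X] [NormedAddCommGroup E]
    [NormedSpace ℝ E] [FiniteDimensional ℝ E] (s : C(X, E)) (r : C(E, X)) (hrs : ∀ x, r (s x) = x)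
    {n : ℕ} (hn : Module.finrank ℝ E < n) (A : Set X) (f : C(X, O (n + 1)))
    (hf : ∀ x ∈ A, (f x).1 *ᵥ lastVec n = lastVec n) :
    ∃ g : C(X, O (n + 1)), f.HomotopicRel g A ∧ ∀ x, (g x).1 *ᵥ lastVec n = lastVec n := by
  have hee : lastVec n ⬝ᵥ lastVec n = 1 := by simp
  let v : X → Fin (n + 1) → ℝ := fun x => (f x).1 *ᵥ lastVec n
  have hv : Continuous v := (continuous_subtype_val.comp f.continuous).matrix_mulVec continuous_const
  have hvv : ∀ x, v x ⬝ᵥ v x = 1 := fun x => by rw [dot_mulVec, hee]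
  let a : C(X, Fin n → ℝ) := ⟨fun x i => v x i.castSucc, by fun_prop⟩
  let b : C(X, ℝ) := ⟨fun x => v x (Fin.last n), by fun_prop⟩
  have hab : ∀ x, a x ⬝ᵥ a x + b x * b x = 1 := fun x => by
    rw [← hvv x]; simp [dotProduct, Fin.sum_univ_castSucc, a, b]
  obtain ⟨δ, hδ, hδ1⟩ : ∃ δ > 0, ∀ y : Fin n → ℝ, dist y 0 < δ → y ⬝ᵥ y < 1 := by
    have hc : Continuous fun y : Fin n → ℝ => y ⬝ᵥ y := continuous_id.dotProduct continuous_id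
    exact Metric.mem_nhds_iff.1 (hc.continuousAt.eventually_lt_const (by simp : _ < (1 : ℝ)))
  obtain ⟨q, hqa, hq0⟩ := exists_nonvanishing s r hrs hn a hδ
  -- `a'` is nowhere zero where `b ≤ 0`, and is equal to `a` where `b = 1`.
  let a' : X → Fin n → ℝ := fun x => a x + (1 - max (b x) 0) • (q x - a x)
  have ha' : Continuous a' := by fun_prop
  have ha'q : ∀ x, b x ≤ 0 → a' x = q x := fun x hx => by simp [a', max_eq_right hx]
  let w : C(X, Fin (n + 1) → ℝ) := ⟨fun x => Fin.snoc (a' x) (b x), by fun_prop⟩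
  have hwa : ∀ x i, w x (Fin.castSucc i) = a' x i := fun x i => by simp [w]
  have hwb : ∀ x, w x (Fin.last n) = b x := fun x => by simp [w]
  have hwv : ∀ x, v x = lastVec n → w x = v x := by
    intro x hx
    have hb : b x = 1 := by simp [b, hx]
    ext i
    refine Fin.lastCases ?_ (fun i => ?_) i
    · rw [hwb]; rfl
    · rw [hwa]; simp [a', hb]; rfl
  -- If `w = -c v`, the last coordinate gives `b = 0`, so `|a| = 1` and `q = -c a`
  -- is too far from `a`.
  have hw1 : ∀ x (c : ℝ), 0 ≤ c → w x ≠ -c • v x := by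
    intro x c hc h
    have h1 : b x = -c * b x := (hwb x).symm.trans (congrFun h (Fin.last n))
    have hb : b x = 0 := by
      have : (1 + c) * b x = 0 := by linarith
      rcases mul_eq_zero.1 this with h | h
      · linarith
      · exact h
    have h2 : q x = -c • a x := by
      rw [← ha'q x hb.le]
      ext i; rw [← hwa, h]; rfl
    have h3 := hqa x
    rw [h2, dist_eq_norm] at h3
    have h4 : -c • a x - a x = -((1 + c) • a x) := by ext i; simp; ring
    rw [h4, norm_neg, norm_smul, Real.norm_of_nonneg (by linarith)] at h3
    have h5 := hδ1 (a x) (by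
      rw [dist_zero_right]; nlinarith [norm_nonneg (a x)])
    have := hab x
    rw [hb] at this
    linarith
  have hw2 : ∀ x (c : ℝ), 0 ≤ c → w x ≠ -c • lastVec n := by
    intro x c hc h
    have h1 : b x = -c := by simpa [hwb] using congrFun h (Fin.last n)
    apply hq0 x
    rw [← ha'q x (by linarith)]
    ext i; rw [← hwa, h]; simp
  -- First turn `f e` to the direction of `w`, then the direction of `w` to `e`.
  obtain ⟨f₁, hf₁, hf₁w⟩ := rotate f (lastVec n) hee w hw1
  obtain ⟨f₂, hf₂, hf₂e⟩ := rotate f₁ (lastVec n) hee (.const X (lastVec n)) (by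
    intro x c hc h
    obtain ⟨ρ, hρ, hx⟩ := hf₁w x
    rw [hx, smul_smul, ContinuousMap.const_apply] at h
    have hne : -c * ρ ≠ 0 := fun h0 => by
      rw [h0, zero_smul] at h
      simpa using congrFun h (Fin.last n)
    refine hw2 x (c * ρ)⁻¹ (by positivity) ?_
    have h' := congrArg (fun y => (-c * ρ)⁻¹ • y) h
    simp only [smul_smul, inv_mul_cancel₀ hne, one_smul] at h'
    rw [← h', ← inv_neg, neg_mul])
  have hmono : ∀ {f g : C(X, O (n + 1))} {S T : Set X}, T ⊆ S → f.HomotopicRel g S →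
      f.HomotopicRel g T := fun hST ⟨F⟩ => ⟨⟨F.1, fun t x hx => F.2 t x (hST hx)⟩⟩
  have h1 : f.HomotopicRel f₁ A := hmono (fun x hx => hwv x (hf x hx)) hf₁
  refine ⟨f₂, h1.trans (hmono (fun x hx => ?_) hf₂), fun x => ?_⟩
  · change lastVec n = _
    rw [← h1.fst_eq_snd hx, hf x hx]
  · obtain ⟨ρ, hρ, hx⟩ := hf₂e x
    have h1 := dot_mulVec (f₂ x) (lastVec n) (lastVec n)
    rw [hx] at h1
    have : ρ * ρ = 1 := by simpa using h1
    have : ρ = 1 := by nlinarith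
    rw [hx, this, one_smul]; rfl


/-! ### The inclusion of `O(n)` into `O(n+1)` -/

lemma incl_mem {n : ℕ} (A : O n) :
    (Matrix.fromBlocks A.1 0 0 (1 : Matrix (Fin 1) (Fin 1) ℝ)).submatrix
      finSumFinEquiv.symm finSumFinEquiv.symm ∈ Matrix.unitaryGroup (Fin (n + 1)) ℝ := by
  rw [Matrix.mem_unitaryGroup_iff, Matrix.star_eq_conjTranspose, Matrix.conjTranspose_submatrix,
    Matrix.submatrix_mul_equiv, Matrix.fromBlocks_conjTranspose, Matrix.fromBlocks_multiply]
  have := Matrix.mem_unitaryGroup_iff.1 A.2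
  rw [Matrix.star_eq_conjTranspose] at this
  rw [this]
  simp

/-- The block inclusion `A ↦ diag(A, 1)` of `O(n)` into `O(n+1)`. -/
noncomputable def incl (n : ℕ) : O n →* O (n + 1) where
  toFun A := ⟨_, incl_mem A⟩
  map_one' := Subtype.ext (by simp)
  map_mul' A B := Subtype.ext (by simp [Matrix.submatrix_mul_equiv, Matrix.fromBlocks_multiply])

lemma incl_castSucc {n : ℕ} (A : O n) (i j : Fin n) :
    (incl n A).1 i.castSucc j.castSucc = A.1 i j := by
  change Matrix.fromBlocks _ _ _ _ (finSumFinEquiv.symm (Fin.castAdd 1 i))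
    (finSumFinEquiv.symm (Fin.castAdd 1 j)) = _
  simp only [finSumFinEquiv_symm_apply_castAdd, Matrix.fromBlocks_apply₁₁]

lemma incl_castSucc_last {n : ℕ} (A : O n) (i : Fin n) :
    (incl n A).1 i.castSucc (Fin.last n) = 0 := by
  change Matrix.fromBlocks _ _ _ _ (finSumFinEquiv.symm (Fin.castAdd 1 i))
    (finSumFinEquiv.symm (Fin.natAdd n 0)) = _
  simp only [finSumFinEquiv_symm_apply_castAdd, finSumFinEquiv_symm_apply_natAdd,
    Matrix.fromBlocks_apply₁₂, Matrix.zero_apply]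

lemma incl_last_castSucc {n : ℕ} (A : O n) (i : Fin n) :
    (incl n A).1 (Fin.last n) i.castSucc = 0 := by
  change Matrix.fromBlocks _ _ _ _ (finSumFinEquiv.symm (Fin.natAdd n 0))
    (finSumFinEquiv.symm (Fin.castAdd 1 i)) = _
  simp only [finSumFinEquiv_symm_apply_castAdd, finSumFinEquiv_symm_apply_natAdd,
    Matrix.fromBlocks_apply₂₁, Matrix.zero_apply]

lemma incl_last_last {n : ℕ} (A : O n) :
    (incl n A).1 (Fin.last n) (Fin.last n) = 1 := by
  change Matrix.fromBlocks _ _ _ _ (finSumFinEquiv.symm (Fin.natAdd n 0))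
    (finSumFinEquiv.symm (Fin.natAdd n 0)) = _
  simp only [finSumFinEquiv_symm_apply_natAdd, Matrix.fromBlocks_apply₂₂, Matrix.one_apply_eq]

lemma continuous_incl (n : ℕ) : Continuous (incl n) :=
  Continuous.subtype_mk ((Continuous.matrix_fromBlocks continuous_subtype_val continuous_const
    continuous_const continuous_const).matrix_submatrix _ _) _

lemma incl_mulVec {n : ℕ} (A : O n) : (incl n A).1 *ᵥ lastVec n = lastVec n := by
  ext i
  rw [Matrix.mulVec_single_one]
  refine Fin.lastCases ?_ (fun i => ?_) i
  · simpa using incl_last_last A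
  · simpa using incl_castSucc_last A i

lemma apply_last {n : ℕ} (B : O (n + 1)) (hB : B.1 *ᵥ lastVec n = lastVec n)
    (i : Fin (n + 1)) : B.1 i (Fin.last n) = lastVec n i := by
  rw [← hB, Matrix.mulVec_single_one]; rfl

lemma last_apply {n : ℕ} (B : O (n + 1)) (hB : B.1 *ᵥ lastVec n = lastVec n)
    (i : Fin (n + 1)) : B.1 (Fin.last n) i = lastVec n i := by
  have h1 : B.1ᵀ * B.1 = 1 := by
    simpa [Matrix.star_eq_conjTranspose, Matrix.conjTranspose_eq_transpose_of_trivial] using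
      Matrix.UnitaryGroup.star_mul_self B
  have h2 : B.1ᵀ *ᵥ lastVec n = lastVec n := by
    conv_lhs => rw [← hB]
    rw [Matrix.mulVec_mulVec, h1, Matrix.one_mulVec]
  rw [← h2, Matrix.mulVec_single_one]; rfl

lemma restrict_mem {n : ℕ} (B : O (n + 1)) (hB : B.1 *ᵥ lastVec n = lastVec n) :
    B.1.submatrix Fin.castSucc Fin.castSucc ∈ Matrix.unitaryGroup (Fin n) ℝ := by
  rw [Matrix.mem_unitaryGroup_iff]
  have h := Matrix.mem_unitaryGroup_iff.1 B.2
  ext i j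
  have h1 := congrFun (congrFun h i.castSucc) j.castSucc
  rw [Matrix.mul_apply, Fin.sum_univ_castSucc, apply_last B hB] at h1
  simpa [Matrix.mul_apply, Matrix.one_apply] using h1

/-- The image of `incl n` is the whole stabilizer of the last basis vector. -/
lemma incl_restrict {n : ℕ} (B : O (n + 1)) (hB : B.1 *ᵥ lastVec n = lastVec n) :
    incl n ⟨_, restrict_mem B hB⟩ = B := by
  ext i j
  refine Fin.lastCases ?_ (fun i => ?_) i <;> refine Fin.lastCases ?_ (fun j => ?_) j
  · rw [incl_last_last, apply_last B hB]; simp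
  · rw [incl_last_castSucc, last_apply B hB]; simp
  · rw [incl_castSucc_last, apply_last B hB]; simp
  · rw [incl_castSucc]; rfl

lemma incl_injective (n : ℕ) : Function.Injective (incl n) := fun A B h => by
  ext i j
  rw [← incl_castSucc A, h, incl_castSucc]

/-- Continuous maps into the stabilizer of the last basis vector factor continuously through
`O(n)`. -/
lemma exists_lift {X : Type*} [TopologicalSpace X] {n : ℕ} (g : C(X, O (n + 1)))
    (hg : ∀ x, (g x).1 *ᵥ lastVec n = lastVec n) :
    ∃ h : C(X, O n), ∀ x, incl n (h x) = g x :=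
  ⟨⟨fun x => ⟨_, restrict_mem (g x) (hg x)⟩, Continuous.subtype_mk
    ((continuous_subtype_val.comp g.continuous).matrix_submatrix _ _) _⟩,
    fun x => incl_restrict (g x) (hg x)⟩

/-! ### Induced maps on homotopy groups -/

/-- Postcomposition of a generalized loop with a pointed map. -/
def mapLoop (N : Type*) {X Y : Type*} [TopologicalSpace X] [TopologicalSpace Y] {x : X} {y : Y}
    (φ : C(X, Y)) (hφ : φ x = y) (p : GenLoop N X x) : GenLoop N Y y :=
  ⟨φ.comp p.1, fun t ht => (congrArg φ (p.2 t ht)).trans hφ⟩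

/-- The map induced on homotopy groups by a pointed map. -/
def mapPi (N : Type*) {X Y : Type*} [TopologicalSpace X] [TopologicalSpace Y] {x : X} {y : Y}
    (φ : C(X, Y)) (hφ : φ x = y) : HomotopyGroup N X x → HomotopyGroup N Y y :=
  Quotient.map (mapLoop N φ hφ) fun _ _ h => h.comp_continuousMap φ

lemma mapPi_mul (N : Type*) [DecidableEq N] [Nonempty N] {X Y : Type*} [TopologicalSpace X]
    [TopologicalSpace Y] {x : X} {y : Y} (φ : C(X, Y)) (hφ : φ x = y) (p q : HomotopyGroup N X x) :
    mapPi N φ hφ (p * q) = mapPi N φ hφ p * mapPi N φ hφ q := by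
  induction p, q using Quotient.inductionOn₂ with | h p q =>
  let i := Classical.arbitrary N
  refine (congrArg (mapPi N φ hφ) (HomotopyGroup.mul_spec (i := i) (p := p) (q := q))).trans
    (Eq.trans ?_ (HomotopyGroup.mul_spec (i := i) (p := mapLoop N φ hφ p)
      (q := mapLoop N φ hφ q)).symm)
  refine congrArg (Quotient.mk _) ?_
  ext t
  exact apply_ite φ _ _ _

/-- The inclusion `O(n) → O(n+1)` induces a bijection on `π_i` for `i + 1 < n`. -/
lemma bijective_incl (i n : ℕ) (hn : i + 1 < n) :
    Function.Bijective (mapPi (Fin i) ⟨incl n, continuous_incl n⟩ (map_one (incl n))) := by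
  -- Clamping coordinatewise with `c` retracts `ℝ^i` onto `I^i`, and `ℝ × ℝ^i` onto `I × I^i`.
  let c : C(ℝ, I) := ⟨Set.projIcc 0 1 zero_le_one, continuous_projIcc⟩
  have hc : ∀ t : I, c t = t := fun t => Set.projIcc_val zero_le_one t
  constructor
  · intro p q
    induction p, q using Quotient.inductionOn₂ with | h p q =>
    intro h
    obtain ⟨H⟩ : GenLoop.Homotopic _ _ := Quotient.exact h
    let A : Set (I × (Fin i → I)) := {x | x.1 = 0 ∨ x.1 = 1 ∨ x.2 ∈ Cube.boundary (Fin i)}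
    have hA : ∀ x ∈ A, (H x).1 *ᵥ lastVec n = lastVec n := by
      rintro ⟨t, x⟩ hx
      rcases hx with rfl | rfl | hx
      · rw [H.apply_zero]; exact incl_mulVec _
      · rw [H.apply_one]; exact incl_mulVec _
      · rw [H.eq_fst t hx]; exact incl_mulVec _
    obtain ⟨G, hHG, hG⟩ := compress (X := I × (Fin i → I)) (E := ℝ × (Fin i → ℝ))
      ⟨fun x => (x.1, fun k => x.2 k), by fun_prop⟩
      ⟨fun x => (c x.1, fun k => c (x.2 k)), by fun_prop⟩
      (fun x => by simp [hc]) (n := n) (by simp; omega) A H.toContinuousMap hA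
    obtain ⟨K, hK⟩ := exists_lift G hG
    have hKH : ∀ x ∈ A, incl n (K x) = H x := fun x hx => by
      rw [hK, ← hHG.fst_eq_snd hx]; rfl
    refine Quotient.sound ⟨⟨⟨K, fun x => ?_, fun x => ?_⟩, fun t x hx => ?_⟩⟩
    · apply incl_injective; refine (hKH _ (Or.inl rfl)).trans ?_; rw [H.apply_zero]; rfl
    · apply incl_injective; refine (hKH _ (Or.inr (Or.inl rfl))).trans ?_; rw [H.apply_one]; rfl
    · apply incl_injective; refine (hKH _ (Or.inr (Or.inr hx))).trans ?_; rw [H.eq_fst t hx]; rfl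
  · intro p
    induction p using Quotient.inductionOn with | h p =>
    have hp : ∀ x ∈ Cube.boundary (Fin i), (p.1 x).1 *ᵥ lastVec n = lastVec n := fun x hx => by
      rw [p.2 x hx]; exact Matrix.one_mulVec _
    obtain ⟨G, hpG, hG⟩ := compress (X := Fin i → I) (E := Fin i → ℝ)
      ⟨fun x k => x k, by fun_prop⟩ ⟨fun x k => c (x k), by fun_prop⟩
      (fun x => by simp [hc]) (n := n) (by simp; omega) _ p.1 hp
    obtain ⟨K, hK⟩ := exists_lift G hG
    refine ⟨⟦⟨K, fun x hx => ?_⟩⟧, ?_⟩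
    · apply incl_injective
      rw [hK, ← hpG.fst_eq_snd hx, p.2 x hx, map_one]
    · refine Quotient.sound (GenLoop.Homotopic.symm ?_)
      have : (⟨incl n, continuous_incl n⟩ : C(O n, O (n + 1))).comp K = G :=
        ContinuousMap.ext hK
      change p.1.HomotopicRel (ContinuousMap.comp ⟨incl n, continuous_incl n⟩ K) _
      rw [this]; exact hpG

/-- The bijection `π_i O(n) ≃ π_i O(n+1)` induced by the inclusion. -/
noncomputable def piEquiv (i : ℕ) {n : ℕ} (hn : i + 1 < n) :
    (π_ i) (O n) 1 ≃ (π_ i) (O (n + 1)) 1 :=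
  .ofBijective _ (bijective_incl i n hn)

/-- The group isomorphism `π_(j+1) O(n) ≃* π_(j+1) O(n+1)` induced by the inclusion. -/
noncomputable def piMulEquiv (j : ℕ) {n : ℕ} (hn : j + 1 + 1 < n) :
    (π_ (j + 1)) (O n) 1 ≃* (π_ (j + 1)) (O (n + 1)) 1 :=
  { piEquiv (j + 1) hn with map_mul' := mapPi_mul _ _ _ }

end StableOrthogonal

/-- **Stability of the homotopy groups of the orthogonal groups.**
For every `i ≥ 0` there is an `N` such that for all `m, n ≥ N` the homotopy groups
`π_i(O(m), I)` and `π_i(O(n), I)` (based at the identity) are isomorphic; that is,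
`π_i O(n)` is independent of `n` for `n` sufficiently large.  The isomorphism is stated
as a bijection for every `i` (covering the case `i = 0` of pointed sets of path
components), together with a group isomorphism whenever `i ≥ 1` (where both homotopy
groups carry their group structures). -/
theorem stable_homotopy_orthogonal (i : ℕ) :
    ∃ N : ℕ, ∀ m n : ℕ, N ≤ m → N ≤ n →
      Nonempty ((π_ i) (Matrix.unitaryGroup (Fin m) ℝ) 1 ≃
        (π_ i) (Matrix.unitaryGroup (Fin n) ℝ) 1) ∧
      ∀ j : ℕ, i = j + 1 →
        Nonempty ((π_ (j + 1)) (Matrix.unitaryGroup (Fin m) ℝ) 1 ≃*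
          (π_ (j + 1)) (Matrix.unitaryGroup (Fin n) ℝ) 1) := by
  refine ⟨i + 2, fun m n hm hn => ⟨?_, ?_⟩⟩
  · have key : ∀ k, i + 2 ≤ k → Nonempty ((π_ i) (Matrix.unitaryGroup (Fin (i + 2)) ℝ) 1 ≃
        (π_ i) (Matrix.unitaryGroup (Fin k) ℝ) 1) := fun k hk => by
      induction k, hk using Nat.le_induction with
      | base => exact ⟨.refl _⟩
      | succ k hk ih => exact ih.map fun e => e.trans (StableOrthogonal.piEquiv i hk)
    exact (key m hm).map2 (fun e f => e.symm.trans f) (key n hn)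
  · rintro j rfl
    have key : ∀ k, j + 1 + 2 ≤ k →
        Nonempty ((π_ (j + 1)) (Matrix.unitaryGroup (Fin (j + 1 + 2)) ℝ) 1 ≃*
          (π_ (j + 1)) (Matrix.unitaryGroup (Fin k) ℝ) 1) := fun k hk => by
      induction k, hk using Nat.le_induction with
      | base => exact ⟨.refl _⟩
      | succ k hk ih => exact ih.map fun e => e.trans (StableOrthogonal.piMulEquiv j hk)
    exact (key m hm).map2 (fun e f => e.symm.trans f) (key n hn)
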